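/- arXiv:2312.14905 — 2 statements merged into one kernel-verified Lean document; each statement's English description precedes it below -/
import Mathlib

section
/- Edges of the permutohedron (Proposition 4.2): Let Q = (C,x) be a quiver pair with m nodes, let ι, j_1, …, j_n be pairwise distinct nodes of Q, let σ be a permutation of {1,…,n}, and let 1 ≤ k ≤ n−1. Let σ′ = σ ∘ (k k+1) be σ precomposed with the transposition of k and k+1. Then the quiver pairs U(m+k, j_{σ(k+1)})(Q_σ) and U(j_{σ(k)}, m+k)(Q_{σ′}) (each with m+n+1 nodes; here m+k is the index of the node created at step k) are permutation-equivalent rel the first m nodes. In other words, two quivers of the permutohedron family that differ by a transposition of neighbouring unlinkings can be unlinked to the same quiver by a single unlinking. -/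
/-! Write `A = j (σ k)`, `B = j (σ (k+1))`, `p = m + k`. After the common first `k` steps the two
sequences perform `U(ι,A), U(ι,B)` and `U(ι,B), U(ι,A)`, so that the new nodes are
`p = (ιA)`, `p + 1 = (ιB)` in one case and `p = (ιB)`, `p + 1 = (ιA)` in the other.
An additional `U(p,B)`, respectively `U(A,p)`, creates the node `(ιA)B`, respectively `A(ιB)`, and
a comparison of entries shows that the results agree after exchanging `p` and `p + 1`
(`isUnlinkTwo`, `linked_base`, `linkedQP_base`).

The remaining steps are `U(ι,c)` with `c ≠ A, B`, which involve neither `p` nor `A` nor `B` and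
hence commute with the additional unlinking. Instead of proving commutation, the equality of
the additional unlinkings is spelled out as a relation between the matrices before it (`Linked`,
`LinkedQP`): every row of one matrix satisfies identities which are additive in the row, and
the row of the node created by `U(ι,c)` is the sum of the rows of `ι` and `c`, up to corrections
at `ι` and `c`, so the relation is preserved (`linked_step`, `linkedQP_step`).
Finally the relation gives the equivalence (`LinkedQP.permEquivRel`).

Matrices are handled as functions on natural numbers through `QP.Cn`, which removes all
transport between the types `Fin (m + t)`.
-/

namespace QuiverUnlink

universe u

/-- Unlinking of the distinct nodes `i` and `j`: the matrix part.
Nodes are indexed `0, …, m-1`; the newly created node has index `m`. -/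
def unlinkC {m : ℕ} (C : Fin m → Fin m → ℤ) (i j : Fin m) :
    Fin (m + 1) → Fin (m + 1) → ℤ := fun a b =>
  if ha : (a : ℕ) < m then
    if hb : (b : ℕ) < m then
      if ((⟨a, ha⟩ : Fin m) = i ∧ (⟨b, hb⟩ : Fin m) = j) ∨
         ((⟨a, ha⟩ : Fin m) = j ∧ (⟨b, hb⟩ : Fin m) = i) then
        C i j - 1
      else C ⟨a, ha⟩ ⟨b, hb⟩
    else
      if (⟨a, ha⟩ : Fin m) = i then C i i + C i j - 1
      else if (⟨a, ha⟩ : Fin m) = j then C j j + C i j - 1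
      else C ⟨a, ha⟩ i + C ⟨a, ha⟩ j
  else
    if hb : (b : ℕ) < m then
      if (⟨b, hb⟩ : Fin m) = i then C i i + C i j - 1
      else if (⟨b, hb⟩ : Fin m) = j then C j j + C i j - 1
      else C ⟨b, hb⟩ i + C ⟨b, hb⟩ j
    else C i i + C j j + 2 * C i j - 1

/-- Unlinking of the distinct nodes `i` and `j`: the generating-parameters part. -/
def unlinkX {G : Type*} [CommGroup G] {m : ℕ} (q : G) (x : Fin m → G) (i j : Fin m) :
    Fin (m + 1) → G := fun a =>
  if ha : (a : ℕ) < m then x ⟨a, ha⟩ else q⁻¹ * x i * x j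

/-- A quiver pair: a symmetric integer matrix together with generating parameters in `G`,
on `m` nodes (indexed `0, …, m-1`). -/
structure QP (G : Type u) where
  m : ℕ
  C : Fin m → Fin m → ℤ
  x : Fin m → G

/-- Matrix entry of a quiver pair, read at natural-number indices (junk value `0` out of range). -/
def QP.Cn {G : Type u} (Q : QP G) (a b : ℕ) : ℤ :=
  if ha : a < Q.m then if hb : b < Q.m then Q.C ⟨a, ha⟩ ⟨b, hb⟩ else 0 else 0

/-- Generating parameter of a quiver pair, read at a natural-number index
(junk value `1` out of range). -/
def QP.xn {G : Type u} [CommGroup G] (Q : QP G) (a : ℕ) : G :=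
  if h : a < Q.m then Q.x ⟨a, h⟩ else 1

/-- One unlinking step `U(i,j)`, with nodes given by natural-number indices.
If the indices are not valid the quiver pair is returned unchanged (this case never
occurs under the validity hypotheses of the statements below). -/
def unlinkStep {G : Type u} [CommGroup G] (q : G) (i j : ℕ) (Q : QP G) : QP G :=
  if h : i < Q.m ∧ j < Q.m ∧ i ≠ j then
    { m := Q.m + 1
      C := unlinkC Q.C ⟨i, h.1⟩ ⟨j, h.2.1⟩
      x := unlinkX q Q.x ⟨i, h.1⟩ ⟨j, h.2.1⟩ }
  else Q

/-- Apply a sequence of unlinkings, leftmost entry first. -/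
def applySeq {G : Type u} [CommGroup G] (q : G) (S : List (ℕ × ℕ)) (Q : QP G) : QP G :=
  S.foldl (fun R e => unlinkStep q e.1 e.2 R) Q

/-- A sequence of unlinkings starting at `m` nodes: the entry at (0-based) position `t`
consists of two distinct node indices `< m + t` (the node created at step `t` has index `m + t`). -/
def ValidSeq (m : ℕ) (S : List (ℕ × ℕ)) : Prop :=
  ∀ t : Fin S.length,
    (S.get t).1 ≠ (S.get t).2 ∧ (S.get t).1 < m + (t : ℕ) ∧ (S.get t).2 < m + (t : ℕ)

/-- Two quiver pairs are permutation-equivalent rel the first `m` nodes. -/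
def PermEquivRel {G : Type u} (m : ℕ) (X Y : QP G) : Prop :=
  ∃ (h : X.m = Y.m) (π : Equiv.Perm (Fin Y.m)),
    (∀ a : Fin Y.m, (a : ℕ) < m → π a = a) ∧
    (∀ a b : Fin X.m, X.C a b = Y.C (π (Fin.cast h a)) (π (Fin.cast h b))) ∧
    (∀ a : Fin X.m, X.x a = Y.x (π (Fin.cast h a)))

/-- Two quiver pairs are permutation-equivalent. -/
def PermEquiv {G : Type u} (X Y : QP G) : Prop :=
  ∃ (h : X.m = Y.m) (π : Equiv.Perm (Fin Y.m)),
    (∀ a b : Fin X.m, X.C a b = Y.C (π (Fin.cast h a)) (π (Fin.cast h b))) ∧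
    (∀ a : Fin X.m, X.x a = Y.x (π (Fin.cast h a)))

/-! ### Matrices of unlinkings and their comparison -/

/-- `C'` (with nodes `0, …, N`) is the matrix obtained from the symmetric matrix `C`
(with nodes `0, …, N-1`) by `U(i,j)`. The corrections `-1` of the definition are written as
indicator functions. -/
structure IsUnlink (N i j : ℕ) (C C' : ℕ → ℕ → ℤ) : Prop where
  old : ∀ a b, a < N → b < N →
    C' a b = C a b - if (a = i ∧ b = j) ∨ (a = j ∧ b = i) then 1 else 0
  row : ∀ a, a < N → C' a N = C a i + C a j - if a = i ∨ a = j then 1 else 0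
  col : ∀ a, a < N → C' N a = C a i + C a j - if a = i ∨ a = j then 1 else 0
  diag : C' N N = C i i + C j j + 2 * C i j - 1

/-- The matrices `C` and `D` on `N` nodes become equal, up to exchanging the nodes `p` and
`p + 1`, after applying `U(p,B)` to `C` and `U(A,p)` to `D`. The three clauses are the equality
of the entries between old nodes, between an old node and the new one, and at the new node. -/
structure Linked (N p A B : ℕ) (C D : ℕ → ℕ → ℤ) : Prop where
  old : ∀ a b, a < N → b < N →
    C a b - (if (a = p ∧ b = B) ∨ (a = B ∧ b = p) then 1 else 0) =
      D (Equiv.swap p (p + 1) a) (Equiv.swap p (p + 1) b) -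
        if (a = A ∧ b = p + 1) ∨ (a = p + 1 ∧ b = A) then 1 else 0
  row : ∀ a, a < N →
    C a p + C a B - (if a = p ∨ a = B then 1 else 0) =
      D (Equiv.swap p (p + 1) a) A + D (Equiv.swap p (p + 1) a) p -
        if a = A ∨ a = p + 1 then 1 else 0
  diag : C p p + C B B + 2 * C p B = D A A + D p p + 2 * D A p

lemma swap_lt {p N a : ℕ} (hp : p + 1 < N) (ha : a < N) : Equiv.swap p (p + 1) a < N := by
  rw [Equiv.swap_apply_def]; split_ifs <;> omega

/-- The matrix after `U(i,A)` and `U(i,B)`, which create the nodes `p` and `p + 1`. -/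
structure IsUnlinkTwo (p i A B : ℕ) (C C' : ℕ → ℕ → ℤ) : Prop where
  old : ∀ a b, a < p → b < p →
    C' a b = C a b - (if (a = i ∧ b = A) ∨ (a = A ∧ b = i) then 1 else 0) -
      if (a = i ∧ b = B) ∨ (a = B ∧ b = i) then 1 else 0
  row₁ : ∀ a, a < p → C' a p = C a i + C a A - if a = i ∨ a = A then 1 else 0
  col₁ : ∀ a, a < p → C' p a = C a i + C a A - if a = i ∨ a = A then 1 else 0
  row₂ : ∀ a, a < p → C' a (p + 1) = C a i + C a B - (if a = A then 1 else 0) -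
    if a = i ∨ a = B then 1 else 0
  col₂ : ∀ a, a < p → C' (p + 1) a = C a i + C a B - (if a = A then 1 else 0) -
    if a = i ∨ a = B then 1 else 0
  diag₁ : C' p p = C i i + C A A + 2 * C i A - 1
  diag₂ : C' (p + 1) (p + 1) = C i i + C B B + 2 * C i B - 1
  cross₁ : C' p (p + 1) = C i i + C i A + C i B + C A B - 1
  cross₂ : C' (p + 1) p = C i i + C i A + C i B + C A B - 1

lemma isUnlinkTwo {p i A B : ℕ} {C C₁ C₂ : ℕ → ℕ → ℤ}
    (hi : i < p) (hB : B < p) (hiA : A ≠ i) (hiB : B ≠ i) (hAB : A ≠ B)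
    (hC : ∀ a b, C a b = C b a)
    (h₁ : IsUnlink p i A C C₁) (h₂ : IsUnlink (p + 1) i B C₁ C₂) :
    IsUnlinkTwo p i A B C C₂ := by
  obtain ⟨o₁, r₁, c₁, d₁⟩ := h₁
  obtain ⟨o₂, r₂, c₂, d₂⟩ := h₂
  have s₁ := hC A i
  have s₂ := hC B i
  have s₃ := hC B A
  refine ⟨fun a b ha hb => ?_, fun a ha => ?_, fun a ha => ?_, fun a ha => ?_, fun a ha => ?_,
    ?_, ?_, ?_, ?_⟩
  · rw [o₂ a b (by omega) (by omega), o₁ a b ha hb]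
  · rw [o₂ a p (by omega) (by omega), r₁ a ha]
    split_ifs <;> omega
  · rw [o₂ p a (by omega) (by omega), c₁ a ha]
    split_ifs <;> omega
  · rw [r₂ a (by omega), o₁ a i ha hi, o₁ a B ha hB]
    split_ifs <;> omega
  · rw [c₂ a (by omega), o₁ a i ha hi, o₁ a B ha hB]
    split_ifs <;> omega
  · rw [o₂ p p (by omega) (by omega), d₁]
    split_ifs <;> omega
  · rw [d₂, o₁ i i hi hi, o₁ B B hB hB, o₁ i B hi hB]
    split_ifs <;> omega
  · rw [r₂ p (by omega), c₁ i hi, c₁ B hB]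
    split_ifs <;> omega
  · rw [c₂ p (by omega), c₁ i hi, c₁ B hB]
    split_ifs <;> omega

/-- The relation `Linked` holds right after the two neighbouring unlinkings, performed in the
two possible orders. -/
lemma linked_base {p i A B : ℕ} {C C' D' : ℕ → ℕ → ℤ}
    (hi : i < p) (hA : A < p) (hB : B < p) (hiA : A ≠ i) (hiB : B ≠ i) (hAB : A ≠ B)
    (hC : ∀ a b, C a b = C b a)
    (h : IsUnlinkTwo p i A B C C') (k : IsUnlinkTwo p i B A C D') :
    Linked (p + 2) p A B C' D' := by
  have hsw : ∀ a < p, Equiv.swap p (p + 1) a = a := fun a ha =>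
    Equiv.swap_apply_of_ne_of_ne (by omega) (by omega)
  have hl := Equiv.swap_apply_left p (p + 1)
  have hr := Equiv.swap_apply_right p (p + 1)
  have s₁ := hC A i
  have s₂ := hC B i
  have s₃ := hC B A
  have cases3 : ∀ a < p + 2, a < p ∨ a = p ∨ a = p + 1 := by omega
  refine ⟨fun a b ha hb => ?_, fun a ha => ?_, ?_⟩
  · rcases cases3 a ha with ha | rfl | rfl <;> rcases cases3 b hb with hb | hb | hb
    · rw [hsw a ha, hsw b hb, h.old a b ha hb, k.old a b ha hb]
      split_ifs <;> omega
    · rw [hb, hsw a ha, hl, h.row₁ a ha, k.row₂ a ha]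
      split_ifs <;> omega
    · rw [hb, hsw a ha, hr, h.row₂ a ha, k.row₁ a ha]
      split_ifs <;> omega
    · rw [hl, hsw b hb, h.col₁ b hb, k.col₂ b hb]
      split_ifs <;> omega
    · rw [hb, hl, h.diag₁, k.diag₂]
      split_ifs <;> omega
    · rw [hb, hl, hr, h.cross₁, k.cross₂]
      split_ifs <;> omega
    · rw [hr, hsw b hb, h.col₂ b hb, k.col₁ b hb]
      split_ifs <;> omega
    · rw [hb, hl, hr, h.cross₂, k.cross₁]
      split_ifs <;> omega
    · rw [hb, hr, h.diag₂, k.diag₁]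
      split_ifs <;> omega
  · rcases cases3 a ha with ha | rfl | rfl
    · have e₁ : C' a B = C a B - if a = i then 1 else 0 := by
        rw [h.old a B ha hB, if_neg (by omega)]
        split_ifs <;> omega
      have e₂ : D' a A = C a A - if a = i then 1 else 0 := by
        rw [k.old a A ha hA, if_neg (by omega)]
        split_ifs <;> omega
      rw [hsw a ha, h.row₁ a ha, k.row₁ a ha, e₁, e₂]
      split_ifs <;> omega
    · rw [hl, h.diag₁, h.col₁ B hB, k.col₂ A hA, k.cross₂]
      split_ifs <;> omega
    · rw [hr, h.cross₂, h.col₂ B hB, k.col₁ A hA, k.diag₁]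
      split_ifs <;> omega
  · have e₁ : C' B B = C B B := by
      rw [h.old B B hB hB, if_neg (by omega), if_neg (by omega), sub_zero, sub_zero]
    have e₂ : D' A A = C A A := by
      rw [k.old A A hA hA, if_neg (by omega), if_neg (by omega), sub_zero, sub_zero]
    have e₃ : C' p B = C B i + C B A := by
      rw [h.col₁ B hB, if_neg (by omega), sub_zero]
    have e₄ : D' A p = C A i + C A B := by
      rw [k.row₁ A hA, if_neg (by omega), sub_zero]
    rw [h.diag₁, k.diag₁, e₁, e₂, e₃, e₄]
    omega

/-- The relation `Linked` is preserved by an unlinking `U(i,c)` with `i, c < p` and `i`, `c`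
different from `A` and `B`: unlinkings of disjoint pairs of nodes commute. -/
lemma linked_step {N p i c A B : ℕ} {C C' D D' : ℕ → ℕ → ℤ}
    (hp : p + 1 < N) (hi : i < p) (hc : c < p) (hA : A < p) (hB : B < p)
    (hiA : A ≠ i) (hiB : B ≠ i) (hcA : A ≠ c) (hcB : B ≠ c)
    (hC : ∀ a b, C a b = C b a) (hD : ∀ a b, D a b = D b a)
    (h : Linked N p A B C D) (hC' : IsUnlink N i c C C') (hD' : IsUnlink N i c D D') :
    Linked (N + 1) p A B C' D' := by
  obtain ⟨o, r, d⟩ := h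
  obtain ⟨o₁, r₁, c₁, d₁⟩ := hC'
  obtain ⟨o₂, r₂, c₂, d₂⟩ := hD'
  have hlt : ∀ a, a < N → Equiv.swap p (p + 1) a < N := fun a => swap_lt hp
  have hsw : ∀ a, a ≠ p → a ≠ p + 1 → Equiv.swap p (p + 1) a = a := fun a ha ha' =>
    Equiv.swap_apply_of_ne_of_ne ha ha'
  have hN := hsw N (by omega) (by omega)
  have hsi := hsw i (by omega) (by omega)
  have hsc := hsw c (by omega) (by omega)
  have inj : ∀ a b, b < p → (Equiv.swap p (p + 1) a = b ↔ a = b) := fun a b hb => by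
    rw [Equiv.swap_apply_eq_iff, hsw b (by omega) (by omega)]
  -- The row of the new node is the sum of the rows of `i` and `c`, for which the corrections
  -- in `Linked.old` vanish.
  have new : ∀ a, a < N → C a i + C a c =
      D (Equiv.swap p (p + 1) a) i + D (Equiv.swap p (p + 1) a) c := fun a ha => by
    have e₁ := o a i ha (by omega)
    have e₂ := o a c ha (by omega)
    rw [hsi, if_neg (by omega), if_neg (by omega)] at e₁
    rw [hsc, if_neg (by omega), if_neg (by omega)] at e₂
    omega
  -- Columns other than `i` and `c`, in particular those of `p`, `A`, `B`, receive no corrections.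
  have oC : ∀ a b, a < N → b < N → b ≠ i → b ≠ c → C' a b = C a b := fun a b ha hb h h' => by
    rw [o₁ a b ha hb, if_neg (by omega), sub_zero]
  have oD : ∀ a b, a < N → b < N → b ≠ i → b ≠ c → D' a b = D a b := fun a b ha hb h h' => by
    rw [o₂ a b ha hb, if_neg (by omega), sub_zero]
  have rC : ∀ a, a < N → a ≠ i → a ≠ c → C' N a = C a i + C a c := fun a ha h h' => by
    rw [c₁ a ha, if_neg (by omega), sub_zero]
  have rD : ∀ a, a < N → a ≠ i → a ≠ c → D' N a = D a i + D a c := fun a ha h h' => by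
    rw [c₂ a ha, if_neg (by omega), sub_zero]
  have cases2 : ∀ a < N + 1, a < N ∨ a = N := by omega
  refine ⟨fun a b ha hb => ?_, fun a ha => ?_, ?_⟩
  · rcases cases2 a ha with ha | ha <;> rcases cases2 b hb with hb | hb
    · rw [o₁ a b ha hb, o₂ _ _ (hlt a ha) (hlt b hb)]
      have := o a b ha hb
      simp only [inj _ i hi, inj _ c hc]
      omega
    · rw [hb, hN, r₁ a ha, r₂ _ (hlt a ha), if_neg (by omega : ¬ (a = p ∧ N = B ∨ a = B ∧ N = p)),
        if_neg (by omega : ¬ (a = A ∧ N = p + 1 ∨ a = p + 1 ∧ N = A))]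
      have := new a ha
      simp only [inj _ i hi, inj _ c hc]
      omega
    · rw [ha, hN, c₁ b hb, c₂ _ (hlt b hb), if_neg (by omega : ¬ (N = p ∧ b = B ∨ N = B ∧ b = p)),
        if_neg (by omega : ¬ (N = A ∧ b = p + 1 ∨ N = p + 1 ∧ b = A))]
      have := new b hb
      simp only [inj _ i hi, inj _ c hc]
      omega
    · have e₁ := new i (by omega)
      have e₂ := new c (by omega)
      rw [hsi] at e₁
      rw [hsc] at e₂
      have := hC c i
      have := hD c i
      rw [ha, hb, hN, d₁, d₂, if_neg (by omega), if_neg (by omega)]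
      omega
  · rcases cases2 a ha with ha | ha
    · rw [oC a p ha (by omega) (by omega) (by omega), oC a B ha (by omega) (by omega) (by omega),
        oD _ A (hlt a ha) (by omega) (by omega) (by omega),
        oD _ p (hlt a ha) (by omega) (by omega) (by omega), r a ha]
    · have e₁ := r i (by omega)
      have e₂ := r c (by omega)
      rw [hsi, if_neg (by omega), if_neg (by omega), hD i A, hD i p, hC i p, hC i B] at e₁
      rw [hsc, if_neg (by omega), if_neg (by omega), hD c A, hD c p, hC c p, hC c B] at e₂
      rw [ha, hN, rC p (by omega) (by omega) (by omega), rC B (by omega) (by omega) (by omega),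
        rD A (by omega) (by omega) (by omega), rD p (by omega) (by omega) (by omega),
        if_neg (by omega), if_neg (by omega)]
      omega
  · rw [oC p p (by omega) (by omega) (by omega) (by omega),
      oC B B (by omega) (by omega) (by omega) (by omega),
      oC p B (by omega) (by omega) (by omega) (by omega),
      oD A A (by omega) (by omega) (by omega) (by omega),
      oD p p (by omega) (by omega) (by omega) (by omega),
      oD A p (by omega) (by omega) (by omega) (by omega), d]

/-! ### Entries of an unlinked quiver pair -/

section

variable {G : Type u} [CommGroup G] {q : G} {i j : ℕ} {Q : QP G}

lemma unlinkStep_m (hi : i < Q.m) (hj : j < Q.m) (hij : i ≠ j) :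
    (unlinkStep q i j Q).m = Q.m + 1 := by
  simp [unlinkStep, hi, hj, hij]

lemma unlinkStep_isUnlink (hs : ∀ a b, Q.Cn a b = Q.Cn b a)
    (hi : i < Q.m) (hj : j < Q.m) (hij : i ≠ j) :
    IsUnlink Q.m i j Q.Cn (unlinkStep q i j Q).Cn := by
  have hji := hs j i
  simp only [QP.Cn, hi, hj, dite_true] at hji
  have e : ∀ a b, (unlinkStep q i j Q).Cn a b =
      if ha : a < Q.m + 1 then if hb : b < Q.m + 1 then
        unlinkC Q.C ⟨i, hi⟩ ⟨j, hj⟩ ⟨a, ha⟩ ⟨b, hb⟩ else 0 else 0 := by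
    intro a b
    have : unlinkStep q i j Q = ⟨Q.m + 1, unlinkC Q.C ⟨i, hi⟩ ⟨j, hj⟩,
      unlinkX q Q.x ⟨i, hi⟩ ⟨j, hj⟩⟩ := by simp [unlinkStep, hi, hj, hij]
    rw [this]; rfl
  refine ⟨fun a b ha hb => ?_, fun a ha => ?_, fun a ha => ?_, ?_⟩
  · rw [e, dif_pos (by omega), dif_pos (by omega)]
    simp only [unlinkC, ha, hb, QP.Cn, dite_true, Fin.mk.injEq]
    grind
  · rw [e, dif_pos (by omega), dif_pos (by omega)]
    simp only [unlinkC, ha, hi, hj, QP.Cn, dite_true, Fin.mk.injEq, lt_irrefl, dite_false]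
    grind
  · rw [e, dif_pos (by omega), dif_pos (by omega)]
    simp only [unlinkC, ha, hi, hj, QP.Cn, dite_true, Fin.mk.injEq, lt_irrefl, dite_false]
    grind
  · rw [e, dif_pos (by omega), dif_pos (by omega)]
    simp [unlinkC, hi, hj, QP.Cn]

lemma unlinkStep_symm (hs : ∀ a b, Q.Cn a b = Q.Cn b a)
    (hi : i < Q.m) (hj : j < Q.m) (hij : i ≠ j) (a b : ℕ) :
    (unlinkStep q i j Q).Cn a b = (unlinkStep q i j Q).Cn b a := by
  obtain ⟨o, r, c, d⟩ := unlinkStep_isUnlink (q := q) hs hi hj hij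
  have hm := unlinkStep_m (q := q) hi hj hij
  by_cases ha : a < Q.m + 1
  · by_cases hb : b < Q.m + 1
    · rcases Nat.lt_succ_iff_lt_or_eq.1 ha with ha | rfl <;>
      rcases Nat.lt_succ_iff_lt_or_eq.1 hb with hb | rfl
      · rw [o a b ha hb, o b a hb ha, hs a b]; grind
      · rw [r a ha, c a ha]
      · rw [r b hb, c b hb]
      · rfl
    · simp [QP.Cn, hm, hb]
  · simp [QP.Cn, hm, ha]

lemma unlinkStep_xn_old (hi : i < Q.m) (hj : j < Q.m) (hij : i ≠ j) {a : ℕ} (ha : a < Q.m) :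
    (unlinkStep q i j Q).xn a = Q.xn a := by
  have : unlinkStep q i j Q = ⟨Q.m + 1, unlinkC Q.C ⟨i, hi⟩ ⟨j, hj⟩,
    unlinkX q Q.x ⟨i, hi⟩ ⟨j, hj⟩⟩ := by simp [unlinkStep, hi, hj, hij]
  rw [this]
  simp [QP.xn, unlinkX, ha, Nat.lt_succ_of_lt ha]

lemma unlinkStep_xn_new (hi : i < Q.m) (hj : j < Q.m) (hij : i ≠ j) :
    (unlinkStep q i j Q).xn Q.m = q⁻¹ * Q.xn i * Q.xn j := by
  have : unlinkStep q i j Q = ⟨Q.m + 1, unlinkC Q.C ⟨i, hi⟩ ⟨j, hj⟩,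
    unlinkX q Q.x ⟨i, hi⟩ ⟨j, hj⟩⟩ := by simp [unlinkStep, hi, hj, hij]
  rw [this]
  simp [QP.xn, unlinkX, hi, hj]

end

/-! ### Linked quiver pairs -/

/-- The quiver pairs `X` and `Y` become equal, up to exchanging the nodes `p` and `p + 1`, after
applying `U(p,B)` to `X` and `U(A,p)` to `Y`. -/
structure LinkedQP {G : Type u} [CommGroup G] (p A B : ℕ) (X Y : QP G) : Prop where
  m_eq : X.m = Y.m
  p_lt : p + 1 < X.m
  symX : ∀ a b, X.Cn a b = X.Cn b a
  symY : ∀ a b, Y.Cn a b = Y.Cn b a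
  linked : Linked X.m p A B X.Cn Y.Cn
  x_old : ∀ a < X.m, X.xn a = Y.xn (Equiv.swap p (p + 1) a)
  x_new : X.xn p * X.xn B = Y.xn A * Y.xn p

section

variable {G : Type u} [CommGroup G] {q : G}

lemma linkedQP_base {i A B : ℕ} {R : QP G} (hs : ∀ a b, R.Cn a b = R.Cn b a)
    (hi : i < R.m) (hA : A < R.m) (hB : B < R.m) (hiA : A ≠ i) (hiB : B ≠ i) (hAB : A ≠ B) :
    LinkedQP R.m A B (unlinkStep q i B (unlinkStep q i A R))
      (unlinkStep q i A (unlinkStep q i B R)) := by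
  have m₁ := unlinkStep_m (q := q) hi hA hiA.symm
  have m₂ := unlinkStep_m (q := q) hi hB hiB.symm
  have s₁ := unlinkStep_symm (q := q) hs hi hA hiA.symm
  have s₂ := unlinkStep_symm (q := q) hs hi hB hiB.symm
  have u₁ := unlinkStep_isUnlink (q := q) hs hi hA hiA.symm
  have u₂ := unlinkStep_isUnlink (q := q) hs hi hB hiB.symm
  have xo₁ := fun a => unlinkStep_xn_old (q := q) hi hA hiA.symm (a := a)
  have xo₂ := fun a => unlinkStep_xn_old (q := q) hi hB hiB.symm (a := a)
  have xn₁ := unlinkStep_xn_new (q := q) hi hA hiA.symm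
  have xn₂ := unlinkStep_xn_new (q := q) hi hB hiB.symm
  generalize unlinkStep q i A R = X at *
  generalize unlinkStep q i B R = Y at *
  have hiX : i < X.m := by omega
  have hBX : B < X.m := by omega
  have hiY : i < Y.m := by omega
  have hAY : A < Y.m := by omega
  have m₃ := unlinkStep_m (q := q) hiX hBX hiB.symm
  have m₄ := unlinkStep_m (q := q) hiY hAY hiA.symm
  have u₃ := unlinkStep_isUnlink (q := q) s₁ hiX hBX hiB.symm
  have u₄ := unlinkStep_isUnlink (q := q) s₂ hiY hAY hiA.symm
  have xo₃ := fun a => unlinkStep_xn_old (q := q) hiX hBX hiB.symm (a := a)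
  have xo₄ := fun a => unlinkStep_xn_old (q := q) hiY hAY hiA.symm (a := a)
  have xn₃ := unlinkStep_xn_new (q := q) hiX hBX hiB.symm
  have xn₄ := unlinkStep_xn_new (q := q) hiY hAY hiA.symm
  rw [m₁] at m₃ u₃ xn₃ xo₃
  rw [m₂] at m₄ u₄ xn₄ xo₄
  refine ⟨by omega, by omega, unlinkStep_symm s₁ hiX hBX hiB.symm,
    unlinkStep_symm s₂ hiY hAY hiA.symm, ?_, fun a ha => ?_, ?_⟩
  · rw [m₃]
    exact linked_base hi hA hB hiA hiB hAB hs (isUnlinkTwo hi hB hiA hiB hAB hs u₁ u₃)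
      (isUnlinkTwo hi hA hiB hiA hAB.symm hs u₂ u₄)
  · rcases (by omega : a < R.m ∨ a = R.m ∨ a = R.m + 1) with h | rfl | rfl
    · rw [Equiv.swap_apply_of_ne_of_ne (by omega) (by omega), xo₃ a (by omega),
        xo₄ a (by omega), xo₁ a h, xo₂ a h]
    · rw [Equiv.swap_apply_left, xo₃ _ (by omega), xn₁, xn₄, xo₂ i hi, xo₂ A hA]
    · rw [Equiv.swap_apply_right, xn₃, xo₁ i hi, xo₁ B hB, xo₄ _ (by omega), xn₂]
  · rw [xo₃ _ (by omega), xo₃ _ (by omega), xo₄ _ (by omega), xo₄ _ (by omega),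
      xn₁, xn₂, xo₁ B hB, xo₂ A hA]
    simp only [mul_assoc, mul_left_comm]

lemma linkedQP_step {p i c A B : ℕ} {X Y : QP G} (hi : i < p) (hc : c < p) (hA : A < p)
    (hB : B < p) (hic : c ≠ i) (hiA : A ≠ i) (hiB : B ≠ i) (hcA : A ≠ c) (hcB : B ≠ c)
    (h : LinkedQP p A B X Y) :
    LinkedQP p A B (unlinkStep q i c X) (unlinkStep q i c Y) := by
  obtain ⟨hm, hp, sX, sY, hL, xo, xn⟩ := h
  have hiX : i < X.m := by omega
  have hcX : c < X.m := by omega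
  have hiY : i < Y.m := by omega
  have hcY : c < Y.m := by omega
  have m₁ := unlinkStep_m (q := q) hiX hcX hic.symm
  have m₂ := unlinkStep_m (q := q) hiY hcY hic.symm
  have u₁ := unlinkStep_isUnlink (q := q) sX hiX hcX hic.symm
  have u₂ := unlinkStep_isUnlink (q := q) sY hiY hcY hic.symm
  have xo₁ := fun a => unlinkStep_xn_old (q := q) hiX hcX hic.symm (a := a)
  have xo₂ := fun a => unlinkStep_xn_old (q := q) hiY hcY hic.symm (a := a)
  have xn₁ := unlinkStep_xn_new (q := q) hiX hcX hic.symm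
  have xn₂ := unlinkStep_xn_new (q := q) hiY hcY hic.symm
  rw [← hm] at u₂ xn₂ xo₂
  refine ⟨by omega, by omega, unlinkStep_symm sX hiX hcX hic.symm,
    unlinkStep_symm sY hiY hcY hic.symm, ?_, fun a ha => ?_, ?_⟩
  · rw [m₁]
    exact linked_step hp hi hc hA hB hiA hiB hcA hcB sX sY hL u₁ u₂
  · rcases (by omega : a < X.m ∨ a = X.m) with h | rfl
    · rw [xo₁ a h, xo₂ _ (swap_lt hp h), xo a h]
    · rw [Equiv.swap_apply_of_ne_of_ne (by omega) (by omega), xn₁, xn₂, xo i hiX, xo c hcX,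
        Equiv.swap_apply_of_ne_of_ne (by omega) (by omega),
        Equiv.swap_apply_of_ne_of_ne (by omega) (by omega)]
  · rw [xo₁ _ (by omega), xo₁ _ (by omega), xo₂ _ (by omega), xo₂ _ (by omega), xn]

lemma linkedQP_applySeq {p i A B : ℕ} (hi : i < p) (hA : A < p) (hB : B < p)
    (hiA : A ≠ i) (hiB : B ≠ i) (L : List (ℕ × ℕ))
    (hL : ∀ e ∈ L, e.1 = i ∧ e.2 < p ∧ e.2 ≠ i ∧ A ≠ e.2 ∧ B ≠ e.2) (X Y : QP G)
    (h : LinkedQP p A B X Y) : LinkedQP p A B (applySeq q L X) (applySeq q L Y) := by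
  induction L generalizing X Y with
  | nil => exact h
  | cons e L ih =>
    obtain ⟨rfl, h₁, h₂, h₃, h₄⟩ := hL e (by simp)
    exact ih (fun e he => hL e (by simp [he])) _ _
      (linkedQP_step hi h₁ hA hB h₂ hiA hiB h₃ h₄ h)

lemma applySeq_m_symm {i : ℕ} (L : List (ℕ × ℕ)) (X : QP G) (hi : i < X.m)
    (hL : ∀ e ∈ L, e.1 = i ∧ e.2 < X.m ∧ e.2 ≠ i) (hs : ∀ a b, X.Cn a b = X.Cn b a) :
    (applySeq q L X).m = X.m + L.length ∧
      ∀ a b, (applySeq q L X).Cn a b = (applySeq q L X).Cn b a := by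
  induction L generalizing X with
  | nil => exact ⟨rfl, hs⟩
  | cons e L ih =>
    obtain ⟨rfl, h₁, h₂⟩ := hL e (by simp)
    have hm := unlinkStep_m (q := q) hi h₁ h₂.symm
    have := ih (unlinkStep q e.1 e.2 X) (by omega)
      (fun f hf => by have := hL f (by simp [hf]); rw [hm]; exact ⟨this.1, by omega, this.2.2⟩)
      (unlinkStep_symm hs hi h₁ h₂.symm)
    refine ⟨?_, this.2⟩
    have h := this.1
    simp only [applySeq, List.foldl_cons, List.length_cons] at h ⊢
    omega

/-- Linked quiver pairs have permutation-equivalent unlinkings; the permutation is the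
transposition of `p` and `p + 1`. -/
lemma LinkedQP.permEquivRel {p A B n : ℕ} {X Y : QP G} (hn : n ≤ p) (hA : A < p) (hB : B < p)
    (h : LinkedQP p A B X Y) :
    PermEquivRel n (unlinkStep q p B X) (unlinkStep q A p Y) := by
  obtain ⟨hm, hp, sX, sY, ⟨o, r, d⟩, xo, xn⟩ := h
  have hpX : p < X.m := by omega
  have hBX : B < X.m := by omega
  have hpY : p < Y.m := by omega
  have hAY : A < Y.m := by omega
  have m₁ := unlinkStep_m (q := q) hpX hBX (by omega)
  have m₂ := unlinkStep_m (q := q) hAY hpY (by omega)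
  obtain ⟨o₁, r₁, c₁, d₁⟩ := unlinkStep_isUnlink (q := q) sX hpX hBX (by omega)
  obtain ⟨o₂, r₂, c₂, d₂⟩ := unlinkStep_isUnlink (q := q) sY hAY hpY (by omega)
  have xo₁ := fun a => unlinkStep_xn_old (q := q) hpX hBX (by omega) (a := a)
  have xo₂ := fun a => unlinkStep_xn_old (q := q) hAY hpY (by omega) (a := a)
  have xn₁ := unlinkStep_xn_new (q := q) hpX hBX (by omega)
  have xn₂ := unlinkStep_xn_new (q := q) hAY hpY (by omega)
  rw [← hm] at o₂ r₂ c₂ d₂ xo₂ xn₂ m₂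
  generalize unlinkStep q p B X = X' at *
  generalize unlinkStep q A p Y = Y' at *
  have hN : Equiv.swap p (p + 1) X.m = X.m :=
    Equiv.swap_apply_of_ne_of_ne (by omega) (by omega)
  have iA : ∀ a, Equiv.swap p (p + 1) a = A ↔ a = A := fun a => by
    rw [Equiv.swap_apply_eq_iff, Equiv.swap_apply_of_ne_of_ne (by omega) (by omega)]
  have ip : ∀ a, Equiv.swap p (p + 1) a = p ↔ a = p + 1 := fun a => by
    rw [Equiv.swap_apply_eq_iff, Equiv.swap_apply_left]
  have hlt : ∀ a, a < X.m → Equiv.swap p (p + 1) a < X.m := fun a => swap_lt hp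
  have key : ∀ a b, a < X'.m → b < X'.m →
      X'.Cn a b = Y'.Cn (Equiv.swap p (p + 1) a) (Equiv.swap p (p + 1) b) := by
    intro a b ha hb
    rcases (by omega : a < X.m ∨ a = X.m) with ha | rfl <;>
    rcases (by omega : b < X.m ∨ b = X.m) with hb | rfl
    · rw [o₁ a b ha hb, o₂ _ _ (hlt a ha) (hlt b hb), o a b ha hb]
      simp only [iA, ip]
    · rw [hN, r₁ a ha, r₂ _ (hlt a ha), r a ha]
      simp only [iA, ip]
    · rw [hN, c₁ b hb, c₂ _ (hlt b hb), r b hb]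
      simp only [iA, ip]
    · rw [hN, d₁, d₂, d]
  have keyx : ∀ a, a < X'.m → X'.xn a = Y'.xn (Equiv.swap p (p + 1) a) := by
    intro a ha
    rcases (by omega : a < X.m ∨ a = X.m) with ha | rfl
    · rw [xo₁ a ha, xo₂ _ (hlt a ha), xo a ha]
    · rw [hN, xn₁, xn₂, mul_assoc, xn, ← mul_assoc]
  have hp' : p < Y'.m := by omega
  have hp1' : p + 1 < Y'.m := by omega
  have hval : ∀ a : Fin Y'.m,
      (Equiv.swap (⟨p, hp'⟩ : Fin Y'.m) ⟨p + 1, hp1'⟩ a : ℕ) = Equiv.swap p (p + 1) (a : ℕ) := by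
    intro a
    simp only [Equiv.swap_apply_def, Fin.ext_iff]
    split_ifs <;> rfl
  refine ⟨by omega, Equiv.swap ⟨p, hp'⟩ ⟨p + 1, hp1'⟩, fun a ha => ?_, fun a b => ?_,
    fun a => ?_⟩
  · apply Fin.ext
    rw [hval, Equiv.swap_apply_of_ne_of_ne (by omega) (by omega)]
  · have := key a b a.2 b.2
    rw [← Fin.val_cast (by omega : X'.m = Y'.m) a, ← Fin.val_cast (by omega : X'.m = Y'.m) b,
      ← hval, ← hval] at this
    simpa [QP.Cn] using this
  · have := keyx a a.2
    rw [← Fin.val_cast (by omega : X'.m = Y'.m) a, ← hval] at this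
    simpa [QP.xn] using this

end

/-! ### Transposing neighbouring unlinkings -/

/-- Exchanging two neighbouring entries of a finite sequence: the lists of values share the part
before and the part after the two entries. -/
lemma ofFn_swap {α : Type*} {n : ℕ} (f : Fin n → α) (k : ℕ) (hk : k + 1 < n) :
    ∃ L₁ L₂ : List α, L₁.length = k ∧ (∀ e ∈ L₁, ∃ t, e = f t) ∧
      (∀ e ∈ L₂, ∃ t : Fin n, k + 1 < (t : ℕ) ∧ e = f t) ∧
      List.ofFn f = L₁ ++ f ⟨k, Nat.lt_of_succ_lt hk⟩ :: f ⟨k + 1, hk⟩ :: L₂ ∧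
      List.ofFn (fun t => f (Equiv.swap (⟨k, Nat.lt_of_succ_lt hk⟩ : Fin n) ⟨k + 1, hk⟩ t)) =
        L₁ ++ f ⟨k + 1, hk⟩ :: f ⟨k, Nat.lt_of_succ_lt hk⟩ :: L₂ := by
  have split : ∀ g : Fin n → α, List.ofFn g = (List.ofFn g).take k ++
      g ⟨k, Nat.lt_of_succ_lt hk⟩ :: g ⟨k + 1, hk⟩ :: (List.ofFn g).drop (k + 2) := by
    intro g
    conv_lhs => rw [← List.take_append_drop k (List.ofFn g)]
    rw [List.drop_eq_getElem_cons (by simp; omega), List.drop_eq_getElem_cons (by simp; omega)]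
    simp
  refine ⟨(List.ofFn f).take k, (List.ofFn f).drop (k + 2), by simp; omega, ?_, ?_, split f, ?_⟩
  · intro e he
    obtain ⟨t, rfl⟩ := List.mem_ofFn.1 (List.mem_of_mem_take he)
    exact ⟨t, rfl⟩
  · intro e he
    obtain ⟨t, ht, rfl⟩ := List.mem_iff_getElem.1 he
    simp only [List.length_drop, List.length_ofFn] at ht
    exact ⟨⟨k + 2 + t, by omega⟩, by simp; omega, by simp⟩
  · rw [split fun t => f (Equiv.swap (⟨k, Nat.lt_of_succ_lt hk⟩ : Fin n) ⟨k + 1, hk⟩ t)]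
    simp only [Equiv.swap_apply_left, Equiv.swap_apply_right]
    congr 1
    · apply List.ext_getElem (by simp)
      intro t h₁ h₂
      simp only [List.length_take, List.length_ofFn] at h₁
      simp only [List.getElem_take, List.getElem_ofFn]
      rw [Equiv.swap_apply_of_ne_of_ne] <;> simp only [ne_eq, Fin.mk.injEq] <;> omega
    · congr 2
      apply List.ext_getElem (by simp)
      intro t h₁ h₂
      simp only [List.getElem_drop, List.getElem_ofFn]
      rw [Equiv.swap_apply_of_ne_of_ne] <;> simp only [ne_eq, Fin.mk.injEq] <;> omega

/-- **Edges of the permutohedron** (Proposition 4.2).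
Let `Q = (C,x)` have `m` nodes, let `ι, j 0, …, j (n-1)` be pairwise distinct nodes, let `σ`
be a permutation of `Fin n` and `Q_σ` the member of the permutohedron family obtained by
applying `U(ι, j (σ 0)), …, U(ι, j (σ (n-1)))` in this order. For a (0-based) position `k`
with `k + 1 < n`, letting `σ' = σ ∘ (k k+1)`, the quiver pairs
`U(m+k, j (σ (k+1))) Q_σ` and `U(j (σ k), m+k) Q_{σ'}` are permutation-equivalent rel the
first `m` nodes (here `m+k` is the index of the node created at step `k`). -/
theorem permutohedron_edges {G : Type u} [CommGroup G] (q : G) {m n : ℕ}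
    (C : Fin m → Fin m → ℤ) (hC : ∀ a b, C a b = C b a) (x : Fin m → G)
    (ι : Fin m) (j : Fin n → Fin m)
    (hinj : Function.Injective j) (hι : ∀ t, j t ≠ ι)
    (σ : Equiv.Perm (Fin n)) (k : ℕ) (hk : k + 1 < n) :
    let Qfam : Equiv.Perm (Fin n) → QP G := fun ρ =>
      applySeq q (List.ofFn fun t : Fin n => ((ι : ℕ), (j (ρ t) : ℕ))) ⟨m, C, x⟩
    let σ' : Equiv.Perm (Fin n) :=
      σ * Equiv.swap (⟨k, by omega⟩ : Fin n) ⟨k + 1, by omega⟩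
    PermEquivRel m
      (unlinkStep q (m + k) ((j (σ ⟨k + 1, by omega⟩) : ℕ)) (Qfam σ))
      (unlinkStep q ((j (σ ⟨k, by omega⟩) : ℕ)) (m + k) (Qfam σ')) := by
  intro Qfam σ'
  obtain ⟨L₁, L₂, hlen, hL₁, hL₂, e₁, e₂⟩ :=
    ofFn_swap (fun t : Fin n => ((ι : ℕ), (j (σ t) : ℕ))) k hk
  have val_ne : ∀ {s t : Fin n}, s ≠ t → (j (σ s) : ℕ) ≠ (j (σ t) : ℕ) := fun hst h =>
    hst (σ.injective (hinj (Fin.ext h)))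
  have val_ne_ι : ∀ t, (j t : ℕ) ≠ (ι : ℕ) := fun t h => hι t (Fin.ext h)
  obtain ⟨hm, hs⟩ := applySeq_m_symm (q := q) (i := ι) L₁ ⟨m, C, x⟩ ι.2
    (fun e he => by
      obtain ⟨t, rfl⟩ := hL₁ e he
      exact ⟨rfl, (j (σ t)).2, val_ne_ι _⟩)
    (fun a b => by
      simp only [QP.Cn]
      split_ifs <;> first | rfl | exact hC _ _)
  have hm' : (applySeq q L₁ ⟨m, C, x⟩).m = m + k := by rw [hm, hlen]
  have lt : ∀ a : Fin m, (a : ℕ) < m + k := fun a => by omega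
  have base := linkedQP_base (q := q) (i := ι) (A := j (σ ⟨k, by omega⟩))
    (B := j (σ ⟨k + 1, hk⟩)) hs (by rw [hm']; exact lt _) (by rw [hm']; exact lt _)
    (by rw [hm']; exact lt _) (val_ne_ι _) (val_ne_ι _) (val_ne (by simp))
  rw [hm'] at base
  have fin := linkedQP_applySeq (q := q) (lt ι) (lt _) (lt _) (val_ne_ι _) (val_ne_ι _) L₂
    (fun e he => by
      obtain ⟨t, ht, rfl⟩ := hL₂ e he
      refine ⟨rfl, lt _, val_ne_ι _, val_ne ?_, val_ne ?_⟩ <;>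
        (simp only [ne_eq, Fin.ext_iff]; omega)) _ _ base
  have q₁ : Qfam σ = applySeq q L₂ (unlinkStep q ι (j (σ ⟨k + 1, hk⟩))
      (unlinkStep q ι (j (σ ⟨k, by omega⟩)) (applySeq q L₁ ⟨m, C, x⟩))) := by
    simp only [Qfam, e₁, applySeq, List.foldl_append, List.foldl_cons]
  have q₂ : Qfam σ' = applySeq q L₂ (unlinkStep q ι (j (σ ⟨k, by omega⟩))
      (unlinkStep q ι (j (σ ⟨k + 1, hk⟩)) (applySeq q L₁ ⟨m, C, x⟩))) := by
    simp only [Qfam, σ', Equiv.Perm.mul_apply, e₂, applySeq, List.foldl_append, List.foldl_cons]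
  rw [q₁, q₂]
  exact fin.permEquivRel (by omega) (lt _) (lt _)

end QuiverUnlink
end

section
/- Permutohedra graph from a tree of unlinkings (Proposition 4.4, gluing claim): Let Q be a quiver pair with m nodes. Let p ≥ 1, and for each v ∈ {1,…,p} let n_v ≥ 1 and let ι_v, j_{v,1}, …, j_{v,n_v} be nodes of Q such that all p + (n_1+⋯+n_p) chosen nodes are pairwise distinct. Let T be a tree on vertex set {1,…,p}, and to every edge e = {v,w} of T assign permutations π_e^v of {1,…,n_v} and π_e^w of {1,…,n_w}. For v ≠ u, let e(v,u) be the last edge on the unique path in T from v to u, and set ψ_v(u) = π_{e(v,u)}^u. For a permutation ρ of {1,…,n_v}, define Q_{v,ρ} by first applying, for each u ∈ {1,…,p} \ {v} taken in increasing order, the unlinkings U(ι_u, j_{u,ψ_v(u)(1)}), …, U(ι_u, j_{u,ψ_v(u)(n_u)}) in this order, and then applying U(ι_v, j_{v,ρ(1)}), …, U(ι_v, j_{v,ρ(n_v)}). Then for every edge e = {v,w} of T, the quiver pairs Q_{v,π_e^v} and Q_{w,π_e^w} are permutation-equivalent rel the first m nodes; consequently the families {Q_{v,ρ}}_ρ (v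 = 1,…,p) form a connected permutohedra graph. -/
/-! The two quiver pairs attached to an edge `{v, w}` are obtained from the same blocks of
unlinkings, applied in different orders. Indeed `prev v w = v` and `prev w v = w`, and
`prev v u = prev w u` for every other vertex `u`: two neighbours of `u` joined by a walk avoiding
`u` coincide, since a tree has no cycle (`eq_of_adj_of_walk`). Blocks of different vertices involve
disjoint sets of original nodes, and two unlinkings `U(i,j)`, `U(k,l)` of a symmetric matrix with
`{i,j} ∩ {k,l} = ∅` commute up to exchanging the two new nodes (`unlinkStep_comm`); in both
orders the entry between the new nodes is `C(i,k) + C(i,l) + C(j,k) + C(j,l)`. As unlinking at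
original nodes respects permutation-equivalence rel these nodes (`NEquiv.unlinkStep`), the blocks
may be permuted freely (`applySeq_flatMap_perm`). -/

namespace QuiverUnlink

universe u

/-! ### Permutation-equivalence at natural-number indices -/

/-- Permutation-equivalence rel the first `m` nodes, encoded by a permutation of `ℕ` that fixes
all indices out of range, so that the same permutation serves after new nodes are appended. -/
def NEquiv {G : Type u} [CommGroup G] (m : ℕ) (X Y : QP G) : Prop :=
  X.m = Y.m ∧ ∃ π : Equiv.Perm ℕ, (∀ a, a < m → π a = a) ∧ (∀ a, X.m ≤ a → π a = a) ∧
    (∀ a b, X.Cn a b = Y.Cn (π a) (π b)) ∧ (∀ a, X.xn a = Y.xn (π a))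

/-- The matrix of `X` is symmetric. -/
def Symm {G : Type u} (X : QP G) : Prop := ∀ a b, X.Cn a b = X.Cn b a

/-- The pair `e` consists of two distinct nodes among the first `m`. -/
def Ok (m : ℕ) (e : ℕ × ℕ) : Prop := e.1 < m ∧ e.2 < m ∧ e.1 ≠ e.2

/-- The pairs `e` and `f` have no node in common. -/
def Disj (e f : ℕ × ℕ) : Prop := e.1 ≠ f.1 ∧ e.1 ≠ f.2 ∧ e.2 ≠ f.1 ∧ e.2 ≠ f.2

theorem Cn_out {G : Type u} {X : QP G} {a b : ℕ} (h : X.m ≤ a ∨ X.m ≤ b) : X.Cn a b = 0 := by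
  unfold QP.Cn
  split_ifs <;> first | rfl | omega

section

variable {G : Type u} [CommGroup G]

theorem NEquiv.refl (m : ℕ) (X : QP G) : NEquiv m X X :=
  ⟨rfl, 1, by simp, by simp, by simp, by simp⟩

theorem NEquiv.trans {m : ℕ} {X Y Z : QP G} (h : NEquiv m X Y) (k : NEquiv m Y Z) :
    NEquiv m X Z := by
  obtain ⟨h0, π, h1, h2, h3, h4⟩ := h
  obtain ⟨k0, σ, k1, k2, k3, k4⟩ := k
  refine ⟨h0.trans k0, π.trans σ, ?_, ?_, ?_, ?_⟩
  · intro a ha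
    simp [h1 a ha, k1 a ha]
  · intro a ha
    simp [h2 a ha, k2 a (h0 ▸ ha)]
  · intro a b
    simp [h3, k3]
  · intro a
    simp [h4, k4]

/-- A permutation of `ℕ` fixing every index `≥ N` preserves the indices `< N`. -/
theorem perm_lt {N : ℕ} {π : Equiv.Perm ℕ} (h : ∀ a, N ≤ a → π a = a) {a : ℕ} :
    π a < N ↔ a < N := by
  constructor
  · intro ha
    by_contra hc
    rw [h a (by omega)] at ha
    omega
  · intro ha
    by_contra hc
    have := π.injective (h (π a) (by omega))
    omega

theorem NEquiv.permEquivRel {m : ℕ} {X Y : QP G} (h : NEquiv m X Y) : PermEquivRel m X Y := by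
  obtain ⟨M, C, x⟩ := X
  obtain ⟨N, D, y⟩ := Y
  obtain ⟨h0, π, h1, h2, h3, h4⟩ := h
  dsimp only at h0 h2
  subst h0
  have hs : ∀ a, M ≤ a → π.symm a = a := fun a ha => by
    rw [Equiv.symm_apply_eq, h2 a ha]
  refine ⟨rfl, ⟨fun a => ⟨π a, (perm_lt h2).2 a.2⟩, fun a => ⟨π.symm a, (perm_lt hs).2 a.2⟩,
    fun a => by simp, fun a => by simp⟩, ?_, ?_, ?_⟩
  · intro a ha
    exact Fin.ext (h1 a ha)
  · intro a b
    have := h3 a b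
    simpa [QP.Cn, (perm_lt h2).2 a.2, (perm_lt h2).2 b.2] using this
  · intro a
    have := h4 a
    simpa [QP.xn, (perm_lt h2).2 a.2] using this

/-! ### A single unlinking -/

theorem unlinkStep_m_s13 (q : G) {X : QP G} {e : ℕ × ℕ} (h : Ok X.m e) :
    (unlinkStep q e.1 e.2 X).m = X.m + 1 := by
  unfold unlinkStep
  rw [dif_pos (show e.1 < X.m ∧ e.2 < X.m ∧ e.1 ≠ e.2 from h)]

theorem unlinkStep_xn (q : G) {X : QP G} {e : ℕ × ℕ} (h : Ok X.m e) (a : ℕ) :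
    (unlinkStep q e.1 e.2 X).xn a =
      if a = X.m then q⁻¹ * X.xn e.1 * X.xn e.2 else X.xn a := by
  unfold unlinkStep
  obtain ⟨h1, h2, h3⟩ := h
  rw [dif_pos ⟨h1, h2, h3⟩]
  simp only [QP.xn, unlinkX]
  split_ifs <;> first | rfl | omega

/-- The new row of the unlinked matrix, read at an old node. -/
def newRow (X : QP G) (e : ℕ × ℕ) (a : ℕ) : ℤ :=
  if a = e.1 then X.Cn e.1 e.1 + X.Cn e.1 e.2 - 1
  else if a = e.2 then X.Cn e.2 e.2 + X.Cn e.1 e.2 - 1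
  else X.Cn a e.1 + X.Cn a e.2

theorem unlinkStep_Cn (q : G) {X : QP G} {e : ℕ × ℕ} (h : Ok X.m e) (a b : ℕ) :
    (unlinkStep q e.1 e.2 X).Cn a b =
      if a = X.m then
        if b = X.m then X.Cn e.1 e.1 + X.Cn e.2 e.2 + 2 * X.Cn e.1 e.2 - 1
        else if b < X.m then newRow X e b else 0
      else if b = X.m then if a < X.m then newRow X e a else 0
      else if (a = e.1 ∧ b = e.2) ∨ (a = e.2 ∧ b = e.1) then X.Cn e.1 e.2 - 1
      else X.Cn a b := by
  unfold unlinkStep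
  obtain ⟨h1, h2, h3⟩ := h
  rw [dif_pos ⟨h1, h2, h3⟩]
  simp only [newRow, QP.Cn, unlinkC, h1, h2, dif_pos, Fin.mk.injEq]
  split_ifs <;> first | rfl | omega

theorem Symm.unlinkStep (q : G) {X : QP G} (hX : Symm X) {e : ℕ × ℕ} (h : Ok X.m e) :
    Symm (unlinkStep q e.1 e.2 X) := by
  intro a b
  rw [unlinkStep_Cn q h, unlinkStep_Cn q h]
  have := hX a b
  grind

theorem NEquiv.unlinkStep (q : G) {m : ℕ} {X Y : QP G} (h : NEquiv m X Y) (hm : m ≤ X.m)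
    {e : ℕ × ℕ} (he : Ok m e) :
    NEquiv m (unlinkStep q e.1 e.2 X) (unlinkStep q e.1 e.2 Y) := by
  obtain ⟨h0, π, h1, h2, h3, h4⟩ := h
  have hX : Ok X.m e := ⟨he.1.trans_le hm, he.2.1.trans_le hm, he.2.2⟩
  have hY : Ok Y.m e := h0 ▸ hX
  have e1 := h1 _ he.1
  have e2 := h1 _ he.2.1
  have hN := h2 _ le_rfl
  have i0 : ∀ a, π a = X.m ↔ a = X.m := fun a =>
    ⟨fun h => π.injective (h.trans hN.symm), fun h => h ▸ hN⟩
  have i1 : ∀ a, π a = e.1 ↔ a = e.1 := fun a =>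
    ⟨fun h => π.injective (h.trans e1.symm), fun h => h ▸ e1⟩
  have i2 : ∀ a, π a = e.2 ↔ a = e.2 := fun a =>
    ⟨fun h => π.injective (h.trans e2.symm), fun h => h ▸ e2⟩
  refine ⟨by rw [unlinkStep_m_s13 q hX, unlinkStep_m_s13 q hY, h0], π, h1, ?_, ?_, ?_⟩
  · intro a ha
    rw [unlinkStep_m_s13 q hX] at ha
    exact h2 a (by omega)
  · intro a b
    rw [unlinkStep_Cn q hX, unlinkStep_Cn q hY]
    simp only [newRow, ← h0, perm_lt h2, i0, i1, i2, h3, e1, e2]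
  · intro a
    rw [unlinkStep_xn q hX, unlinkStep_xn q hY]
    simp only [← h0, i0, h4, e1, e2]

/-- Unlinkings at disjoint pairs of nodes commute up to exchanging the two new nodes. -/
theorem unlinkStep_comm (q : G) {m : ℕ} {X : QP G} (hX : Symm X) (hm : m ≤ X.m) {e f : ℕ × ℕ}
    (he : Ok m e) (hf : Ok m f) (hd : Disj e f) :
    NEquiv m (unlinkStep q f.1 f.2 (unlinkStep q e.1 e.2 X))
      (unlinkStep q e.1 e.2 (unlinkStep q f.1 f.2 X)) := by
  have he0 : Ok X.m e := ⟨he.1.trans_le hm, he.2.1.trans_le hm, he.2.2⟩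
  have hf0 : Ok X.m f := ⟨hf.1.trans_le hm, hf.2.1.trans_le hm, hf.2.2⟩
  have he1 : Ok (unlinkStep q f.1 f.2 X).m e := by
    rw [unlinkStep_m_s13 q hf0]
    exact ⟨by have := he0.1; omega, by have := he0.2.1; omega, he.2.2⟩
  have hf1 : Ok (unlinkStep q e.1 e.2 X).m f := by
    rw [unlinkStep_m_s13 q he0]
    exact ⟨by have := hf0.1; omega, by have := hf0.2.1; omega, hf.2.2⟩
  have hs : ∀ a, Equiv.swap X.m (X.m + 1) a =
      if a = X.m then X.m + 1 else if a = X.m + 1 then X.m else a :=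
    fun a => Equiv.swap_apply_def _ _ _
  refine ⟨?_, Equiv.swap X.m (X.m + 1), ?_, ?_, ?_, ?_⟩
  · rw [unlinkStep_m_s13 q hf1, unlinkStep_m_s13 q he1, unlinkStep_m_s13 q hf0, unlinkStep_m_s13 q he0]
  · intro a ha
    rw [hs, if_neg (by omega), if_neg (by omega)]
  · intro a ha
    rw [unlinkStep_m_s13 q hf1, unlinkStep_m_s13 q he0] at ha
    rw [hs, if_neg (by omega), if_neg (by omega)]
  · intro a b
    obtain ⟨a1, a2, a3⟩ := he0
    obtain ⟨b1, b2, b3⟩ := hf0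
    obtain ⟨d1, d2, d3, d4⟩ := hd
    have s1 := hX e.1 f.1
    have s2 := hX e.1 f.2
    have s3 := hX e.2 f.1
    have s4 := hX e.2 f.2
    have s5 := hX e.1 e.2
    have s6 := hX f.1 f.2
    simp only [unlinkStep_Cn q hf1, unlinkStep_Cn q he1, newRow, unlinkStep_m_s13 q ⟨a1, a2, a3⟩,
      unlinkStep_m_s13 q ⟨b1, b2, b3⟩, unlinkStep_Cn q ⟨a1, a2, a3⟩, unlinkStep_Cn q ⟨b1, b2, b3⟩, hs]
    have o := fun a b => Cn_out (X := X) (a := a) (b := b)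
    generalize X.Cn = c at *
    generalize X.m = N at *
    obtain ⟨i, j⟩ := e
    obtain ⟨k, l⟩ := f
    dsimp only at *
    have o1 := o a b
    rcases eq_or_ne a N with rfl | ha
    · rcases eq_or_ne b a with rfl | hb
      · grind
      · rcases eq_or_ne b (a + 1) with rfl | hb'
        · grind
        · grind
    · rcases eq_or_ne a (N + 1) with rfl | ha'
      · rcases eq_or_ne b N with rfl | hb
        · grind
        · rcases eq_or_ne b (N + 1) with rfl | hb'
          · grind
          · grind
      · rcases eq_or_ne b N with rfl | hb
        · grind
        · rcases eq_or_ne b (N + 1) with rfl | hb'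
          · grind
          · grind
  · intro a
    have a1 := he0.1
    have a2 := he0.2.1
    have b1 := hf0.1
    have b2 := hf0.2.1
    simp only [unlinkStep_xn q hf1, unlinkStep_xn q he1, unlinkStep_m_s13 q he0, unlinkStep_m_s13 q hf0,
      unlinkStep_xn q he0, unlinkStep_xn q hf0, hs]
    have o : ∀ a, X.m ≤ a → X.xn a = 1 := fun a ha => dif_neg (by omega)
    have o1 := o (X.m + 1) (by omega)
    grind

/-! ### Reordering sequences of unlinkings -/

theorem applySeq_cons (q : G) (e : ℕ × ℕ) (S : List (ℕ × ℕ)) (X : QP G) :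
    applySeq q (e :: S) X = applySeq q S (unlinkStep q e.1 e.2 X) := rfl

theorem applySeq_append (q : G) (S R : List (ℕ × ℕ)) (X : QP G) :
    applySeq q (S ++ R) X = applySeq q R (applySeq q S X) := List.foldl_append

theorem Ok.mono {m N : ℕ} {e : ℕ × ℕ} (h : Ok m e) (hm : m ≤ N) : Ok N e :=
  ⟨h.1.trans_le hm, h.2.1.trans_le hm, h.2.2⟩

theorem applySeq_good (q : G) {m : ℕ} (S : List (ℕ × ℕ)) (hS : ∀ e ∈ S, Ok m e) {X : QP G}
    (hX : Symm X) (hm : m ≤ X.m) : Symm (applySeq q S X) ∧ m ≤ (applySeq q S X).m := by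
  induction S generalizing X with
  | nil => exact ⟨hX, hm⟩
  | cons e S ih =>
    have he := (hS e (by simp)).mono hm
    exact ih (fun f hf => hS f (by simp [hf])) (hX.unlinkStep q he)
      (by rw [unlinkStep_m_s13 q he]; omega)

theorem NEquiv.applySeq (q : G) {m : ℕ} (S : List (ℕ × ℕ)) (hS : ∀ e ∈ S, Ok m e) {X Y : QP G}
    (h : NEquiv m X Y) (hm : m ≤ X.m) : NEquiv m (applySeq q S X) (applySeq q S Y) := by
  induction S generalizing X Y with
  | nil => exact h
  | cons e S ih =>
    have he := hS e (by simp)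
    exact ih (fun f hf => hS f (by simp [hf])) (h.unlinkStep q hm he)
      (by rw [unlinkStep_m_s13 q (he.mono hm)]; omega)

theorem applySeq_step_comm (q : G) {m : ℕ} (S : List (ℕ × ℕ)) (hS : ∀ e ∈ S, Ok m e) {e : ℕ × ℕ}
    (he : Ok m e) (hd : ∀ f ∈ S, Disj e f) {X : QP G} (hX : Symm X) (hm : m ≤ X.m) :
    NEquiv m (applySeq q S (unlinkStep q e.1 e.2 X)) (unlinkStep q e.1 e.2 (applySeq q S X)) := by
  induction S generalizing X with
  | nil => exact NEquiv.refl _ _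
  | cons f S ih =>
    have hf := hS f (by simp)
    have hS' : ∀ e ∈ S, Ok m e := fun g hg => hS g (by simp [hg])
    have h1 := unlinkStep_m_s13 q (he.mono hm)
    have h2 := unlinkStep_m_s13 q (hf.mono hm)
    rw [applySeq_cons, applySeq_cons]
    refine NEquiv.trans (NEquiv.applySeq q S hS'
      (unlinkStep_comm q hX hm he hf (hd f (by simp))) ?_) ?_
    · rw [unlinkStep_m_s13 q (hf.mono (by omega))]
      omega
    · exact ih hS' (fun g hg => hd g (by simp [hg])) (hX.unlinkStep q (hf.mono hm)) (by omega)

theorem applySeq_comm (q : G) {m : ℕ} (S R : List (ℕ × ℕ)) (hS : ∀ e ∈ S, Ok m e)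
    (hR : ∀ e ∈ R, Ok m e) (hd : ∀ e ∈ S, ∀ f ∈ R, Disj e f) {X : QP G} (hX : Symm X)
    (hm : m ≤ X.m) :
    NEquiv m (applySeq q R (applySeq q S X)) (applySeq q S (applySeq q R X)) := by
  induction S generalizing X with
  | nil => exact NEquiv.refl _ _
  | cons e S ih =>
    have he := hS e (by simp)
    have hS' : ∀ e ∈ S, Ok m e := fun g hg => hS g (by simp [hg])
    have h1 := unlinkStep_m_s13 q (he.mono hm)
    have hX' := hX.unlinkStep q (he.mono hm)
    rw [applySeq_cons, applySeq_cons]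
    refine (ih hS' (fun g hg => hd g (by simp [hg])) hX' (by omega)).trans ?_
    exact NEquiv.applySeq q S hS' (applySeq_step_comm q R hR he (hd e (by simp)) hX hm)
      (applySeq_good q R hR hX' (by omega)).2

/-- Pairwise disjoint blocks of unlinkings may be applied in any order. -/
theorem applySeq_flatMap_perm (q : G) {m : ℕ} {α : Type*} (f : α → List (ℕ × ℕ))
    (hf : ∀ a, ∀ e ∈ f a, Ok m e) (hd : ∀ a b, a ≠ b → ∀ e ∈ f a, ∀ e' ∈ f b, Disj e e')
    {l₁ l₂ : List α} (h : l₁.Perm l₂) {X : QP G} (hX : Symm X) (hm : m ≤ X.m) :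
    NEquiv m (applySeq q (l₁.flatMap f) X) (applySeq q (l₂.flatMap f) X) := by
  induction h generalizing X with
  | nil => exact NEquiv.refl _ _
  | cons a _ ih =>
    simp only [List.flatMap_cons, applySeq_append]
    obtain ⟨h1, h2⟩ := applySeq_good q (f a) (hf a) hX hm
    exact ih h1 h2
  | swap a b l =>
    by_cases hab : a = b
    · subst hab
      exact NEquiv.refl _ _
    simp only [List.flatMap_cons, applySeq_append]
    have h1 := applySeq_good q (f b) (hf b) hX hm
    refine NEquiv.applySeq q _ ?_
      (applySeq_comm q _ _ (hf b) (hf a) (hd b a (Ne.symm hab)) hX hm)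
      (applySeq_good q (f a) (hf a) h1.1 h1.2).2
    intro e he
    obtain ⟨c, -, hc⟩ := List.mem_flatMap.1 he
    exact hf c e hc
  | trans _ _ ih1 ih2 => exact (ih1 hX hm).trans (ih2 hX hm)

end

/-! ### The tree -/

/-- In a forest, two neighbours of `u` joined by a walk avoiding `u` are equal. -/
theorem eq_of_adj_of_walk {V : Type*} {T : SimpleGraph V} (hT : T.IsAcyclic)
    {a b u : V} (ha : T.Adj a u) (hb : T.Adj b u) (W : T.Walk a b) (hW : u ∉ W.support) :
    a = b := by
  classical
  -- The path `u, a, …, b` must be the edge `u, b`.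
  have hp : (SimpleGraph.Walk.cons ha.symm W.bypass).IsPath :=
    (SimpleGraph.Walk.cons_isPath_iff _ _).2
      ⟨W.bypass_isPath, fun h => hW (W.support_bypass_subset_support h)⟩
  have hq : (SimpleGraph.Walk.cons hb.symm SimpleGraph.Walk.nil).IsPath := by
    simp [hb.ne.symm]
  have := congrArg Subtype.val ((hT.subsingleton_path u b).elim ⟨_, hp⟩ ⟨_, hq⟩)
  have := congrArg (fun w => w.getVert 1) this
  simpa using this

/-! ### Gluing along the edges of the tree -/

/-- **Permutohedra graph from a tree of unlinkings** (Proposition 4.4, gluing claim).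
Let `Q = (C,x)` have `m` nodes; for each vertex `v` of a tree `T` on `Fin p` choose `n v ≥ 1`
and nodes `ι v, j v 0, …, j v (n v - 1)` of `Q`, all `p + Σ_v n v` chosen nodes pairwise
distinct. To each end `w` of an edge `{v,w}` of `T` assign a permutation `P v w` of
`Fin (n w)`. For `v ≠ u` let `prev v u` be the neighbour of `u` on the unique path in `T`
from `v` to `u` (characterised by: `prev v u` is adjacent to `u` and reachable from `v` by a
walk avoiding `u`), and set `ψ_v(u) = P (prev v u) u`. Define `Q_{v,ρ}` by first applying,
for each `u ≠ v` in increasing order, the unlinkings `U(ι u, j u (ψ_v(u) 0)), …`, and then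
`U(ι v, j v (ρ 0)), …`. Then for every edge `{v,w}` of `T`, the quiver pairs `Q_{v, P w v}`
and `Q_{w, P v w}` are permutation-equivalent rel the first `m` nodes (so the families
`{Q_{v,ρ}}_ρ` glue into a connected permutohedra graph). -/
theorem permutohedra_graph_from_tree {G : Type u} [CommGroup G] (q : G) {m p : ℕ}
    (hp : 1 ≤ p)
    (C : Fin m → Fin m → ℤ) (hC : ∀ a b, C a b = C b a) (x : Fin m → G)
    (n : Fin p → ℕ) (hn : ∀ v, 1 ≤ n v)
    (ι : Fin p → Fin m) (j : ∀ v : Fin p, Fin (n v) → Fin m)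
    (hnodes : Function.Injective
      (fun z : Σ v : Fin p, Option (Fin (n v)) => z.2.elim (ι z.1) (fun t => j z.1 t)))
    (T : SimpleGraph (Fin p)) (hT : T.IsTree)
    (P : ∀ _ w : Fin p, Equiv.Perm (Fin (n w)))
    (prev : Fin p → Fin p → Fin p)
    (hprev : ∀ v u : Fin p, v ≠ u →
      T.Adj (prev v u) u ∧ ∃ W : T.Walk v (prev v u), u ∉ W.support) :
    let block : ∀ u : Fin p, Equiv.Perm (Fin (n u)) → List (ℕ × ℕ) := fun u ρ =>
      List.ofFn fun t : Fin (n u) => ((ι u : ℕ), (j u (ρ t) : ℕ))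
    let Qfam : ∀ v : Fin p, Equiv.Perm (Fin (n v)) → QP G := fun v ρ =>
      applySeq q
        ((((List.finRange p).filter (fun u => decide (u ≠ v))).flatMap
            (fun u => block u (P (prev v u) u))) ++ block v ρ)
        ⟨m, C, x⟩
    ∀ v w : Fin p, T.Adj v w →
      PermEquivRel m (Qfam v (P w v)) (Qfam w (P v w)) := by
  intro block Qfam v w hvw
  have hvw' : v ≠ w := hvw.ne
  -- `f u` is the block of `u` in both sequences.
  let f : Fin p → List (ℕ × ℕ) := fun u => if u = v then block v (P w v) else
    block u (P (prev v u) u)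
  have hpv : prev v w = v := by
    obtain ⟨h1, W, hW⟩ := hprev v w hvw'
    exact (eq_of_adj_of_walk hT.2 hvw h1 W hW).symm
  have hpw : prev w v = w := by
    obtain ⟨h1, W, hW⟩ := hprev w v hvw'.symm
    exact (eq_of_adj_of_walk hT.2 hvw.symm h1 W hW).symm
  have hpu : ∀ u, u ≠ v → u ≠ w → prev w u = prev v u := by
    intro u hv hw
    obtain ⟨h1, W, hW⟩ := hprev v u hv.symm
    obtain ⟨h2, W', hW'⟩ := hprev w u hw.symm
    refine eq_of_adj_of_walk hT.2 h2 h1 (W'.reverse.append (SimpleGraph.Walk.cons hvw.symm W)) ?_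
    simp [SimpleGraph.Walk.mem_support_append_iff, hW, hW', hw]
  have hij : ∀ u u' s, ι u ≠ j u' s := by
    intro u u' s h
    have h' := @hnodes ⟨u, none⟩ ⟨u', some s⟩ h
    obtain rfl : u = u' := congrArg Sigma.fst h'
    simp at h'
  have hmem : ∀ u, ∀ e ∈ f u, ∃ s, e = ((ι u : ℕ), (j u s : ℕ)) := by
    intro u e he
    by_cases huv : u = v
    · subst huv
      simp only [f, if_pos, block, List.mem_ofFn] at he
      obtain ⟨t, rfl⟩ := he
      exact ⟨_, rfl⟩
    · simp only [f, if_neg huv, block, List.mem_ofFn] at he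
      obtain ⟨t, rfl⟩ := he
      exact ⟨_, rfl⟩
  -- Hence both sequences are concatenations of the blocks `f u`, in different orders of the vertices.
  have key : ∀ z : Fin p, ∀ σ : Equiv.Perm (Fin (n z)), f z = block z σ →
      (∀ u, u ≠ z → f u = block u (P (prev z u) u)) →
      Qfam z σ = applySeq q
        (((List.finRange p).filter (fun u => decide (u ≠ z)) ++ [z]).flatMap f) ⟨m, C, x⟩ := by
    intro z σ hz hu
    simp only [Qfam, List.flatMap_append, List.flatMap_singleton, hz]
    congr 2
    refine List.flatMap_congr fun u hmem => (hu u ?_).symm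
    simpa using hmem
  have hperm : ∀ z : Fin p,
      ((List.finRange p).filter (fun u => decide (u ≠ z)) ++ [z]).Perm (List.finRange p) := by
    intro z
    refine (List.perm_ext_iff_of_nodup ?_ (List.nodup_finRange p)).2 ?_
    · simp [List.nodup_append, (List.nodup_finRange p).filter]
    · intro a
      simp [em']
  rw [key v (P w v) (by simp [f]) (fun u hu => by simp [f, hu]),
    key w (P v w) (by simp [f, hvw'.symm, hpv]) ?_]
  · refine (applySeq_flatMap_perm q f ?_ ?_ ((hperm v).trans (hperm w).symm) ?_ le_rfl).permEquivRel
    · intro u e he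
      obtain ⟨s, rfl⟩ := hmem u e he
      exact ⟨(ι u).2, (j u s).2, fun h => hij u u s (Fin.ext h)⟩
    · intro u u' hne e he e' he'
      obtain ⟨s, rfl⟩ := hmem u e he
      obtain ⟨s', rfl⟩ := hmem u' e' he'
      refine ⟨fun h => hne ?_, fun h => hij u u' s' (Fin.ext h),
        fun h => hij u' u s (Fin.ext h.symm), fun h => hne ?_⟩
      · exact congrArg Sigma.fst (@hnodes ⟨u, none⟩ ⟨u', none⟩ (Fin.ext h))
      · exact congrArg Sigma.fst (@hnodes ⟨u, some s⟩ ⟨u', some s'⟩ (Fin.ext h))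
    · intro a b
      simp only [QP.Cn]
      split_ifs <;> first | rfl | exact hC _ _
  · intro u hu
    by_cases huv : u = v
    · subst huv
      simp [f, hpw]
    · simp [f, huv, hpu u huv hu]

end QuiverUnlink
end
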